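/- (Pointwise energy-dissipation inequality for the standard linear FrBD_{n+1}-GKV model; core of Lemma 5.2.) Let Ω ⊆ ℝ³ be open (with coordinates (x, y, s)), let ε ≥ 0, let v̄ : Ω → ℝ² be a function, V_r : ℝ → ℝ with V_r(s) > 0, and let z, z_1, …, z_n : Ω → ℝ² be differentiable functions satisfying the standard linear FrBD_{n+1}-GKV equations at every point of Ω. Define z₀ := z − Σ_{i=1}^n z_i, the energy density q := ½ z₀ᵀ K₀ z₀ + ½ Σ_{i=1}^n z_iᵀ K_i z_i, and the total force f := K₀ z₀. Then at every point of Ω one has ∂q/∂s − ∂q/∂x ≤ −fᵀ v̄. -/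

import Mathlib

open Matrix

/-- The regularised Euclidean norm `‖y‖_{2,ε} = √(‖y‖₂² + ε)` on `ℝ²`. -/
noncomputable def regNorm (ε : ℝ) (y : Fin 2 → ℝ) : ℝ := Real.sqrt (y ⬝ᵥ y + ε)

/-!
The energy changes at the rate `f ⬝ᵥ z' - ∑ᵢ gᵢ ⬝ᵥ ζᵢ'`, where `gᵢ = f - Kᵢ ζᵢ` is the part of the
force `f` carried by the `i`-th damper. This rate is linear in the velocities, so `∂q/∂s - ∂q/∂x` is
its value at `z' = D z`, `ζᵢ' = D ζᵢ`. The equations read `D z = -R f - v̄` and `D ζᵢ = Gᵢ gᵢ` with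
positive semidefinite `R = V_r⁻¹ ‖M V_r v̄‖_{2,ε} M⁻²` and `Gᵢ = V_r⁻¹ Cᵢ⁻¹`, hence the rate is
`-f ⬝ᵥ v̄ - f ⬝ᵥ R f - ∑ᵢ gᵢ ⬝ᵥ Gᵢ gᵢ`, at most `-f ⬝ᵥ v̄`.
-/

section Derivatives

variable {𝕜 m k : Type*} [NontriviallyNormedField 𝕜] [Fintype m] {t : 𝕜}

theorem hasDerivAt_dotProduct {u v : 𝕜 → m → 𝕜} {u' v' : m → 𝕜}
    (hu : HasDerivAt u u' t) (hv : HasDerivAt v v' t) :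
    HasDerivAt (fun r => u r ⬝ᵥ v r) (u' ⬝ᵥ v t + u t ⬝ᵥ v') t := by
  simp only [dotProduct, ← Finset.sum_add_distrib]
  exact HasDerivAt.fun_sum fun i _ => (hasDerivAt_pi.1 hu i).fun_mul (hasDerivAt_pi.1 hv i)

theorem hasDerivAt_mulVec [Finite k] (A : Matrix k m 𝕜) {u : 𝕜 → m → 𝕜} {u' : m → 𝕜}
    (hu : HasDerivAt u u' t) : HasDerivAt (fun r => A *ᵥ u r) (A *ᵥ u') t := by
  have := Fintype.ofFinite k
  refine hasDerivAt_pi.2 fun i => ?_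
  simpa only [mulVec, zero_dotProduct, zero_add] using
    hasDerivAt_dotProduct (hasDerivAt_const t (A i)) hu

theorem hasDerivAt_dotProduct_mulVec_self {A : Matrix m m 𝕜} (hA : A.IsSymm)
    {u : 𝕜 → m → 𝕜} {u' : m → 𝕜} (hu : HasDerivAt u u' t) :
    HasDerivAt (fun r => u r ⬝ᵥ A *ᵥ u r) (2 * (A *ᵥ u t ⬝ᵥ u')) t := by
  have hsymm : u t ⬝ᵥ A *ᵥ u' = A *ᵥ u t ⬝ᵥ u' := by
    rw [dotProduct_mulVec, ← mulVec_transpose, hA.eq]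
  refine (hasDerivAt_dotProduct hu (hasDerivAt_mulVec A hu)).congr_deriv ?_
  rw [hsymm, dotProduct_comm, two_mul]

end Derivatives

section Mobility

variable {m : Type*} [Fintype m] [DecidableEq m] {A : Matrix m m ℝ} {c : ℝ}

theorem dotProduct_smul_inv_mulVec_self_nonneg (hA : A.PosSemidef) (hc : 0 ≤ c) (w : m → ℝ) :
    0 ≤ w ⬝ᵥ c • (A⁻¹ *ᵥ w) := by
  rw [dotProduct_smul]
  exact mul_nonneg hc (hA.inv.dotProduct_mulVec_nonneg w)

theorem dotProduct_smul_inv_mul_self_mulVec_self_nonneg (hA : A.IsHermitian) (hc : 0 ≤ c)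
    (w : m → ℝ) : 0 ≤ w ⬝ᵥ c • ((A * A)⁻¹ *ᵥ w) := by
  have hAA : (A * A).PosSemidef := by simpa only [hA.eq] using posSemidef_conjTranspose_mul_self A
  exact dotProduct_smul_inv_mulVec_self_nonneg hAA hc w

end Mobility

section GKV

variable {m κ : Type*} [Fintype m] [Fintype κ]

/-- The energy density `q = ½ z₀ᵀK₀z₀ + ½ ∑ᵢ ζᵢᵀKᵢζᵢ` of a GKV bristle with total deflection `z` and
Kelvin-Voigt deflections `ζᵢ`, where `z₀ = z - ∑ᵢ ζᵢ`. -/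
noncomputable def gkvEnergy (K₀ : Matrix m m ℝ) (K : κ → Matrix m m ℝ)
    (z : m → ℝ) (ζ : κ → m → ℝ) : ℝ :=
  (1/2) * ((z - ∑ i, ζ i) ⬝ᵥ K₀ *ᵥ (z - ∑ i, ζ i)) + (1/2) * ∑ i, ζ i ⬝ᵥ K i *ᵥ ζ i

/-- The total bristle force `f = K₀ z₀` with `z₀ = z - ∑ᵢ ζᵢ`. -/
def gkvForce (K₀ : Matrix m m ℝ) (z : m → ℝ) (ζ : κ → m → ℝ) : m → ℝ :=
  K₀ *ᵥ (z - ∑ i, ζ i)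

/-- The rate of change of `gkvEnergy` when the deflections `z`, `ζᵢ` move with velocities `z'`,
`ζᵢ'`, written as the power fed in at the tip minus the power absorbed by the dampers. -/
def gkvPower (K₀ : Matrix m m ℝ) (K : κ → Matrix m m ℝ) (z : m → ℝ) (ζ : κ → m → ℝ)
    (z' : m → ℝ) (ζ' : κ → m → ℝ) : ℝ :=
  gkvForce K₀ z ζ ⬝ᵥ z' - ∑ i, (gkvForce K₀ z ζ - K i *ᵥ ζ i) ⬝ᵥ ζ' i

variable {K₀ : Matrix m m ℝ} {K : κ → Matrix m m ℝ}

theorem hasDerivAt_gkvEnergy (hK₀ : K₀.IsSymm) (hK : ∀ i, (K i).IsSymm)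
    {z : ℝ → m → ℝ} {ζ : κ → ℝ → m → ℝ} {z' : m → ℝ} {ζ' : κ → m → ℝ} {t : ℝ}
    (hz : HasDerivAt z z' t) (hζ : ∀ i, HasDerivAt (ζ i) (ζ' i) t) :
    HasDerivAt (fun r => gkvEnergy K₀ K (z r) fun i => ζ i r)
      (gkvPower K₀ K (z t) (fun i => ζ i t) z' ζ') t := by
  have hz₀ : HasDerivAt (fun r => z r - ∑ i, ζ i r) (z' - ∑ i, ζ' i) t :=
    hz.fun_sub (HasDerivAt.fun_sum fun i _ => hζ i)
  have hspring := hasDerivAt_dotProduct_mulVec_self hK₀ hz₀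
  have hbranches := HasDerivAt.fun_sum (u := Finset.univ)
    fun i _ => hasDerivAt_dotProduct_mulVec_self (hK i) (hζ i)
  refine ((hspring.const_mul (1/2)).fun_add (hbranches.const_mul (1/2))).congr_deriv ?_
  simp only [gkvPower, gkvForce, dotProduct_sub, sub_dotProduct, dotProduct_sum,
    Finset.sum_sub_distrib, ← Finset.mul_sum]
  ring

theorem gkvPower_sub (z : m → ℝ) (ζ : κ → m → ℝ) (z₁ z₂ : m → ℝ) (ζ₁ ζ₂ : κ → m → ℝ) :
    gkvPower K₀ K z ζ (z₁ - z₂) (ζ₁ - ζ₂) =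
      gkvPower K₀ K z ζ z₁ ζ₁ - gkvPower K₀ K z ζ z₂ ζ₂ := by
  simp only [gkvPower, Pi.sub_apply (f := ζ₁), dotProduct_sub, Finset.sum_sub_distrib]
  ring

theorem gkvPower_le_neg_force_dotProduct_slip {R : (m → ℝ) → m → ℝ} {G : κ → (m → ℝ) → m → ℝ}
    (hR : ∀ w, 0 ≤ w ⬝ᵥ R w) (hG : ∀ i w, 0 ≤ w ⬝ᵥ G i w)
    {z z' v : m → ℝ} {ζ ζ' : κ → m → ℝ}
    (hz : z' = -R (gkvForce K₀ z ζ) - v)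
    (hζ : ∀ i, ζ' i = G i (gkvForce K₀ z ζ - K i *ᵥ ζ i)) :
    gkvPower K₀ K z ζ z' ζ' ≤ -(gkvForce K₀ z ζ ⬝ᵥ v) := by
  set f := gkvForce K₀ z ζ with hf
  have hdampers : 0 ≤ ∑ i, (f - K i *ᵥ ζ i) ⬝ᵥ G i (f - K i *ᵥ ζ i) :=
    Finset.sum_nonneg fun i _ => hG i _
  calc gkvPower K₀ K z ζ z' ζ'
      = -(f ⬝ᵥ v) - f ⬝ᵥ R f - ∑ i, (f - K i *ᵥ ζ i) ⬝ᵥ G i (f - K i *ᵥ ζ i) := by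
        simp only [gkvPower, ← hf, hz, hζ, dotProduct_sub, dotProduct_neg]
        ring
    _ ≤ -(f ⬝ᵥ v) := by linarith [hR f]

/-- `R` and `Gᵢ` are the laws, linear in the model, giving the sliding velocity and the damper
velocities in terms of the forces. -/
theorem frbd_gkv_pointwise_dissipation_general
    (hK₀ : K₀.IsSymm) (hK : ∀ i, (K i).IsSymm)
    {R : (m → ℝ) → m → ℝ} {G : κ → (m → ℝ) → m → ℝ}
    (hR : ∀ w, 0 ≤ w ⬝ᵥ R w) (hG : ∀ i w, 0 ≤ w ⬝ᵥ G i w)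
    {z : ℝ → ℝ → m → ℝ} {ζ : κ → ℝ → ℝ → m → ℝ} {zx zs v : m → ℝ} {ζx ζs : κ → m → ℝ} {x s : ℝ}
    (hzx : HasDerivAt (fun x' => z x' s) zx x) (hzs : HasDerivAt (fun s' => z x s') zs s)
    (hζx : ∀ i, HasDerivAt (fun x' => ζ i x' s) (ζx i) x)
    (hζs : ∀ i, HasDerivAt (fun s' => ζ i x s') (ζs i) s)
    (hDz : zs - zx = -R (gkvForce K₀ (z x s) fun i => ζ i x s) - v)
    (hDζ : ∀ i, ζs i - ζx i =
      G i (gkvForce K₀ (z x s) (fun j => ζ j x s) - K i *ᵥ ζ i x s)) :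
    ∃ qx qs : ℝ,
      HasDerivAt (fun x' => gkvEnergy K₀ K (z x' s) fun i => ζ i x' s) qx x ∧
      HasDerivAt (fun s' => gkvEnergy K₀ K (z x s') fun i => ζ i x s') qs s ∧
      qs - qx ≤ -(gkvForce K₀ (z x s) (fun i => ζ i x s) ⬝ᵥ v) := by
  refine ⟨_, _, hasDerivAt_gkvEnergy hK₀ hK hzx hζx, hasDerivAt_gkvEnergy hK₀ hK hzs hζs, ?_⟩
  rw [← gkvPower_sub]
  exact gkvPower_le_neg_force_dotProduct_slip hR hG hDz hDζ

end GKV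

/-- Pointwise energy-dissipation inequality for the standard linear FrBD_{n+1}-GKV model
(core of Lemma 5.2): along `D = ∂/∂s − ∂/∂x`, the energy density
`q = ½ z₀ᵀK₀z₀ + ½ Σᵢ zᵢᵀKᵢzᵢ` (with `z₀ = z − Σᵢ zᵢ`) satisfies
`∂q/∂s − ∂q/∂x ≤ −fᵀ v̄` at every point of `Ω`, where `f = K₀ z₀`. -/
theorem frbd_gkv_pointwise_dissipation (n : ℕ)
    (K₀ : Matrix (Fin 2) (Fin 2) ℝ) (K C : Fin n → Matrix (Fin 2) (Fin 2) ℝ)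
    (hK₀ : K₀.PosDef) (hK : ∀ i, (K i).PosDef) (hC : ∀ i, (C i).PosDef)
    (Mm : (Fin 2 → ℝ) → Matrix (Fin 2) (Fin 2) ℝ) (hMm : ∀ y, (Mm y).PosDef)
    (ε : ℝ) (hε : 0 ≤ ε)
    (Ω : Set (ℝ × ℝ × ℝ)) (hΩ : IsOpen Ω)
    (vb : ℝ → ℝ → ℝ → (Fin 2 → ℝ))
    (Vr : ℝ → ℝ) (hVr : ∀ s, 0 < Vr s)
    (z : ℝ → ℝ → ℝ → (Fin 2 → ℝ)) (zi : Fin n → ℝ → ℝ → ℝ → (Fin 2 → ℝ))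
    (zx zs : ℝ → ℝ → ℝ → (Fin 2 → ℝ)) (zix zis : Fin n → ℝ → ℝ → ℝ → (Fin 2 → ℝ))
    -- partial derivatives of the states
    (hzx : ∀ x y s, (x, y, s) ∈ Ω → HasDerivAt (fun x' => z x' y s) (zx x y s) x)
    (hzs : ∀ x y s, (x, y, s) ∈ Ω → HasDerivAt (fun s' => z x y s') (zs x y s) s)
    (hzix : ∀ i x y s, (x, y, s) ∈ Ω → HasDerivAt (fun x' => zi i x' y s) (zix i x y s) x)
    (hzis : ∀ i x y s, (x, y, s) ∈ Ω → HasDerivAt (fun s' => zi i x y s') (zis i x y s) s)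
    -- the standard linear FrBD_{n+1}-GKV equations: D z = Ψ K₀ z₀ − v̄
    (hPDEz : ∀ x y s, (x, y, s) ∈ Ω →
      zs x y s - zx x y s =
        -(((Vr s)⁻¹ *
            regNorm ε ((Mm (Vr s • vb x y s)).mulVec (Vr s • vb x y s))) •
          ((Mm (Vr s • vb x y s) * Mm (Vr s • vb x y s))⁻¹.mulVec
            (K₀.mulVec (z x y s - ∑ i, zi i x y s)))) - vb x y s)
    -- and D zᵢ = (1/V_r) Cᵢ⁻¹ (K₀ z₀ − Kᵢ zᵢ)
    (hPDEzi : ∀ i x y s, (x, y, s) ∈ Ω →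
      zis i x y s - zix i x y s =
        (Vr s)⁻¹ • ((C i)⁻¹.mulVec
          (K₀.mulVec (z x y s - ∑ j, zi j x y s) - (K i).mulVec (zi i x y s)))) :
    ∀ x y s, (x, y, s) ∈ Ω →
      ∃ qx qs : ℝ,
        HasDerivAt (fun x' =>
          (1/2) * ((z x' y s - ∑ i, zi i x' y s) ⬝ᵥ
            K₀.mulVec (z x' y s - ∑ i, zi i x' y s)) +
          (1/2) * ∑ i, zi i x' y s ⬝ᵥ (K i).mulVec (zi i x' y s)) qx x ∧
        HasDerivAt (fun s' =>
          (1/2) * ((z x y s' - ∑ i, zi i x y s') ⬝ᵥ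
            K₀.mulVec (z x y s' - ∑ i, zi i x y s')) +
          (1/2) * ∑ i, zi i x y s' ⬝ᵥ (K i).mulVec (zi i x y s')) qs s ∧
        qs - qx ≤
          -(K₀.mulVec (z x y s - ∑ i, zi i x y s) ⬝ᵥ vb x y s) := by
  intro x y s hxys
  have hV : 0 ≤ (Vr s)⁻¹ := inv_nonneg.2 (hVr s).le
  exact frbd_gkv_pointwise_dissipation_general
    (z := fun x' s' => z x' y s') (ζ := fun i x' s' => zi i x' y s')
    (isHermitian_iff_isSymm.1 hK₀.isHermitian)
    (fun i => isHermitian_iff_isSymm.1 (hK i).isHermitian)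
    (dotProduct_smul_inv_mul_self_mulVec_self_nonneg (hMm _).isHermitian
      (mul_nonneg hV (Real.sqrt_nonneg _)))
    (fun i => dotProduct_smul_inv_mulVec_self_nonneg (hC i).posSemidef hV)
    (hzx x y s hxys) (hzs x y s hxys) (hzix · x y s hxys) (hzis · x y s hxys)
    (hPDEz x y s hxys) (hPDEzi · x y s hxys)
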